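/- arXiv:2603.10509 — 2 statements merged into one kernel-verified Lean document; each statement's English description precedes it below -/
import Mathlib

section
/- Let L be a symmetric real N×N matrix satisfying the EEP condition with respect to a partition of the N nodes into k nonempty clusters, let σ ∈ ℝ, and let F_1,…,F_k, H_1,…,H_k ∈ ℝ^{m×m} be arbitrary real m×m matrices. Define the operator 𝓛 = Σ_{l=1}^k E^l ⊗ F_l − σ Σ_{l=1}^k (L E^l) ⊗ H_l ∈ ℝ^{Nm×Nm}, where ⊗ denotes the Kronecker product. Then the transversal subspace S_⊥ is invariant under 𝓛, i.e., 𝓛 x ∈ S_⊥ for every x ∈ S_⊥. -/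
open Matrix Kronecker BigOperators

/-!
The slice of `(A ⊗ B) x` at a component `a` is `A` applied to a linear combination of slices of `x`.
So if `A` preserves a subspace `W` of node vectors, then `A ⊗ B` preserves the vectors all of whose
slices lie in `W`, whatever `B` is. For `W` the vectors with zero cluster sums it remains to see
that the `E^l` and `L` preserve `W`. The former scale each cluster by a constant. For the latter,
the sum of `L y` over a cluster pairs `y` with a sum of rows of `L`; by symmetry and the EEP
condition this sum of rows is constant on clusters, so it annihilates `W`.
-/

section Slices

variable {R n n' m m' : Type*} [CommSemiring R]

variable (m) in
/-- The vectors `x` indexed by `n × m` all of whose slices `x (·, a)` lie in `W`; for finite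
`n` and `m` this is `W ⊗ Rᵐ` inside `Rⁿ ⊗ Rᵐ`. -/
def slicesIn (W : Submodule R (n → R)) : Submodule R (n × m → R) :=
  ⨅ a, W.comap (LinearMap.funLeft R R fun i => (i, a))

theorem mem_slicesIn {W : Submodule R (n → R)} {x : n × m → R} :
    x ∈ slicesIn m W ↔ ∀ a, (fun i => x (i, a)) ∈ W :=
  Submodule.mem_iInf _

variable [Fintype n] [Fintype m]

theorem kronecker_mulVec_slice (A : Matrix n' n R) (B : Matrix m' m R) (x : n × m → R) (a : m') :
    (fun i => ((A ⊗ₖ B) *ᵥ x) (i, a)) = A *ᵥ ∑ b, B a b • fun j => x (j, b) := by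
  let X : Matrix m n R := of fun b j => x (j, b)
  calc (fun i => ((A ⊗ₖ B) *ᵥ vec X) (i, a))
    _ = (B * X * Aᵀ) a := by rw [kronecker_mulVec_vec]; rfl
    _ = A *ᵥ (B a ᵥ* X) := by rw [mul_apply_eq_vecMul, mul_apply_eq_vecMul, vecMul_transpose]
    _ = A *ᵥ ∑ b, B a b • fun j => x (j, b) := by rw [vecMul_eq_sum]; rfl

theorem kronecker_mulVec_mem_slicesIn {W : Submodule R (n → R)} {W' : Submodule R (n' → R)}
    {A : Matrix n' n R} (hA : ∀ y ∈ W, A *ᵥ y ∈ W') (B : Matrix m' m R) {x : n × m → R}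
    (hx : x ∈ slicesIn m W) : (A ⊗ₖ B) *ᵥ x ∈ slicesIn m' W' := by
  refine mem_slicesIn.2 fun a => ?_
  rw [kronecker_mulVec_slice]
  exact hA _ (sum_mem fun b _ => W.smul_mem _ (mem_slicesIn.1 hx b))

end Slices

section Clusters

variable {R n κ m : Type*} [CommSemiring R] [Fintype n] [DecidableEq κ]

/-- The external equitable partition condition, for the partition of the nodes into the fibers of
`c`: the sum of a row of `L` over a cluster depends only on the cluster of the row. -/
def SatisfiesEEP (c : n → κ) (L : Matrix n n R) : Prop :=
  ∀ (β : κ) (i j : n), c i = c j →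
    ∑ p ∈ Finset.univ.filter (fun p => c p = β), L i p =
    ∑ p ∈ Finset.univ.filter (fun p => c p = β), L j p

variable (R) in
/-- The diagonal matrix `E^l` that projects onto the nodes of cluster `l`. -/
def clusterProjection [DecidableEq n] (c : n → κ) (l : κ) : Matrix n n R :=
  diagonal fun i => if c i = l then 1 else 0

variable (R) in
/-- The node vectors (one scalar per node) whose sum over every cluster vanishes. The clusters are
the fibers of `c`; an empty fiber imposes no condition. -/
def zeroClusterSums (c : n → κ) : Submodule R (n → R) where
  carrier := {y | ∀ l, ∑ j ∈ Finset.univ.filter (fun j => c j = l), y j = 0}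
  zero_mem' := by simp
  add_mem' hy hz l := by simp [Finset.sum_add_distrib, hy l, hz l]
  smul_mem' r y hy l := by simp [← Finset.mul_sum, hy l]

variable (R m) in
/-- The transversal subspace `S_⊥`: the vectors with zero cluster sums in every component. -/
def transversalSubspace (c : n → κ) : Submodule R (n × m → R) :=
  slicesIn m (zeroClusterSums R c)

theorem mem_transversalSubspace {c : n → κ} {x : n × m → R} :
    x ∈ transversalSubspace R m c ↔
      ∀ l a, ∑ j ∈ Finset.univ.filter (fun j => c j = l), x (j, a) = 0 :=
  mem_slicesIn.trans forall_comm

theorem sum_cluster_mul_eq_zero {c : n → κ} {f y : n → R} (hf : f.FactorsThrough c)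
    (hy : y ∈ zeroClusterSums R c) (l : κ) :
    ∑ j ∈ Finset.univ.filter (fun j => c j = l), f j * y j = 0 := by
  obtain ⟨g, rfl⟩ : ∃ g : κ → R, f = g ∘ c := (Function.factorsThrough_iff f).1 hf
  calc ∑ j ∈ Finset.univ.filter (fun j => c j = l), g (c j) * y j
    _ = ∑ j ∈ Finset.univ.filter (fun j => c j = l), g l * y j :=
        Finset.sum_congr rfl fun j hj => by rw [(Finset.mem_filter.1 hj).2]
    _ = 0 := by rw [← Finset.mul_sum, hy l, mul_zero]

theorem dotProduct_eq_zero_of_factorsThrough {c : n → κ} {f y : n → R} (hf : f.FactorsThrough c)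
    (hy : y ∈ zeroClusterSums R c) : f ⬝ᵥ y = 0 := by
  rw [dotProduct, ← Finset.sum_fiberwise_of_maps_to fun i _ => Finset.mem_image_of_mem c
    (Finset.mem_univ i)]
  exact Finset.sum_eq_zero fun l _ => sum_cluster_mul_eq_zero hf hy l

theorem clusterProjection_mulVec_mem_zeroClusterSums [DecidableEq n] (c : n → κ) (l : κ)
    {y : n → R} (hy : y ∈ zeroClusterSums R c) :
    clusterProjection R c l *ᵥ y ∈ zeroClusterSums R c := by
  intro l'
  simp only [clusterProjection, mulVec_diagonal]
  exact sum_cluster_mul_eq_zero (fun i j hij => by rw [hij]) hy l'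

theorem SatisfiesEEP.mulVec_mem_zeroClusterSums {c : n → κ} {L : Matrix n n R}
    (hL : SatisfiesEEP c Lᵀ) {y : n → R} (hy : y ∈ zeroClusterSums R c) :
    L *ᵥ y ∈ zeroClusterSums R c := by
  intro l
  calc ∑ j ∈ Finset.univ.filter (fun j => c j = l), (L *ᵥ y) j
    _ = (fun p => ∑ j ∈ Finset.univ.filter (fun j => c j = l), L j p) ⬝ᵥ y := by
        simp only [mulVec, dotProduct, Finset.sum_mul]
        exact Finset.sum_comm
    _ = 0 := dotProduct_eq_zero_of_factorsThrough (hL l) hy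

end Clusters

theorem transversal_subspace_invariant_general {R n κ m : Type*} [CommRing R] [Fintype n]
    [DecidableEq n] [Fintype κ] [DecidableEq κ] [Fintype m] {c : n → κ} {L : Matrix n n R}
    (hL : SatisfiesEEP c Lᵀ) (σ : R) (F H : κ → Matrix m m R) {x : n × m → R}
    (hx : x ∈ transversalSubspace R m c) :
    ((∑ l, clusterProjection R c l ⊗ₖ F l) - σ • ∑ l, (L * clusterProjection R c l) ⊗ₖ H l) *ᵥ x ∈
      transversalSubspace R m c := by
  have hE (l : κ) : (clusterProjection R c l ⊗ₖ F l) *ᵥ x ∈ transversalSubspace R m c :=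
    kronecker_mulVec_mem_slicesIn
      (fun _ hy => clusterProjection_mulVec_mem_zeroClusterSums c l hy) _ hx
  have hLE (l : κ) : ((L * clusterProjection R c l) ⊗ₖ H l) *ᵥ x ∈ transversalSubspace R m c := by
    refine kronecker_mulVec_mem_slicesIn (fun y hy => ?_) _ hx
    rw [← mulVec_mulVec]
    exact hL.mulVec_mem_zeroClusterSums (clusterProjection_mulVec_mem_zeroClusterSums c l hy)
  rw [sub_mulVec, smul_mulVec, sum_mulVec, sum_mulVec]
  exact sub_mem (sum_mem fun l _ => hE l) (Submodule.smul_mem _ σ (sum_mem fun l _ => hLE l))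

/-- For a symmetric matrix `L` satisfying the EEP condition with respect to a
partition into `k` nonempty clusters (encoded by the surjective cluster map `c`), the operator
`𝓛 = ∑ l, E^l ⊗ F_l − σ • ∑ l, (L E^l) ⊗ H_l` leaves the transversal subspace `S_⊥`
(vectors with zero cluster sums in every component) invariant. -/
theorem transversal_subspace_invariant
    {N k m : ℕ} (c : Fin N → Fin k) (hc : Function.Surjective c)
    (L : Matrix (Fin N) (Fin N) ℝ) (hL : L.IsSymm)
    (hEEP : ∀ (β : Fin k) (i j : Fin N), c i = c j →
      ∑ p ∈ Finset.univ.filter (fun p => c p = β), L i p =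
      ∑ p ∈ Finset.univ.filter (fun p => c p = β), L j p)
    (σ : ℝ) (F H : Fin k → Matrix (Fin m) (Fin m) ℝ)
    (E : Fin k → Matrix (Fin N) (Fin N) ℝ)
    (hE : ∀ l, E l = Matrix.diagonal (fun i => if c i = l then (1 : ℝ) else 0))
    (𝓛 : Matrix (Fin N × Fin m) (Fin N × Fin m) ℝ)
    (h𝓛 : 𝓛 = (∑ l, (E l) ⊗ₖ (F l)) - σ • ∑ l, ((L * E l) ⊗ₖ (H l)))
    (x : Fin N × Fin m → ℝ)
    (hx : ∀ (l : Fin k) (a : Fin m),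
      ∑ j ∈ Finset.univ.filter (fun j => c j = l), x (j, a) = 0) :
    ∀ (l : Fin k) (a : Fin m),
      ∑ j ∈ Finset.univ.filter (fun j => c j = l), (𝓛.mulVec x) (j, a) = 0 := by
  obtain rfl : E = clusterProjection ℝ c := funext hE
  subst h𝓛
  have hLT : SatisfiesEEP c Lᵀ := by rw [hL.eq]; exact hEEP
  exact mem_transversalSubspace.1
    (transversal_subspace_invariant_general hLT σ F H (mem_transversalSubspace.2 hx))
end

section
/- Let L ∈ ℝ^{N×N} satisfy the EEP condition with respect to a partition of the N nodes into k nonempty clusters, let σ ∈ ℝ, and let F, H : ℝ^m → ℝ^m be arbitrary maps. Define the coupled vector field G(x)_i = F(x_i) − σ Σ_{j=1}^N L_{ij} H(x_j) on (ℝ^m)^N. If x ∈ (ℝ^m)^N is constant on clusters (x_i = x_j whenever c(i) = c(j)), then G(x) is also constant on clusters: G(x)_i = G(x)_j whenever c(i) = c(j). -/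
open Matrix BigOperators

/-!
On a cluster a cluster-constant state is a single vector, so `∑ p, L i p • y p` sees the `i`-th row
of `L` only through its sums over clusters. These sums agree for nodes of the same cluster.
-/

section

variable {ι κ R M : Type*} [DecidableEq κ] [Semiring R]

/-- The external equitable partition (EEP) condition on a coupling matrix `L`: the sum of row `i` of
`L` over any cluster depends only on the cluster of `i`. The partition is encoded by the
cluster-assignment map `c`; labels in `κ` outside the range of `c` stand for empty clusters. -/
def IsExternallyEquitable [Fintype ι] (c : ι → κ) (L : Matrix ι ι R) : Prop :=
  ∀ β, (fun i ↦ ∑ p with c p = β, L i p).FactorsThrough c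

section AddCommMonoid

variable [AddCommMonoid M] [Module R M] {c : ι → κ} {y : ι → M}

theorem sum_fiber_smul_of_factorsThrough (hy : y.FactorsThrough c) (s : Finset ι) (a : ι → R)
    (q : ι) :
    ∑ p ∈ s with c p = c q, a p • y p = (∑ p ∈ s with c p = c q, a p) • y q := by
  rw [Finset.sum_smul]
  refine Finset.sum_congr rfl fun p hp ↦ ?_
  rw [hy (Finset.mem_filter.mp hp).2]

theorem sum_smul_eq_sum_smul_of_sum_fiber_eq (hy : y.FactorsThrough c) {s : Finset ι} {a b : ι → R}
    (hab : ∀ β, ∑ p ∈ s with c p = β, a p = ∑ p ∈ s with c p = β, b p) :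
    ∑ p ∈ s, a p • y p = ∑ p ∈ s, b p • y p := by
  have maps_to_image : ∀ p ∈ s, c p ∈ s.image c := fun _ ↦ Finset.mem_image_of_mem c
  rw [← Finset.sum_fiberwise_of_maps_to maps_to_image,
    ← Finset.sum_fiberwise_of_maps_to maps_to_image]
  refine Finset.sum_congr rfl fun β hβ ↦ ?_
  obtain ⟨q, -, rfl⟩ := Finset.mem_image.mp hβ
  rw [sum_fiber_smul_of_factorsThrough hy, sum_fiber_smul_of_factorsThrough hy, hab]

theorem IsExternallyEquitable.sum_smul_factorsThrough [Fintype ι] {L : Matrix ι ι R}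
    (hL : IsExternallyEquitable c L) (hy : y.FactorsThrough c) :
    (fun i ↦ ∑ j, L i j • y j).FactorsThrough c :=
  fun _ _ hij ↦ sum_smul_eq_sum_smul_of_sum_fiber_eq hy fun β ↦ hL β hij

end AddCommMonoid

theorem coupled_field_preserves_cluster_constant_general {X : Type*} [Fintype ι]
    [AddCommGroup M] [Module R M] {c : ι → κ} {L : Matrix ι ι R} (hL : IsExternallyEquitable c L)
    {σ : R} {F H : X → M} {G : (ι → X) → ι → M}
    (hG : ∀ x i, G x i = F (x i) - σ • ∑ j, L i j • H (x j))
    {x : ι → X} (hx : x.FactorsThrough c) :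
    (G x).FactorsThrough c := by
  intro i j hij
  have internal_eq : F (x i) = F (x j) := hx.comp_left F hij
  have coupling_eq : ∑ p, L i p • H (x p) = ∑ p, L j p • H (x p) :=
    hL.sum_smul_factorsThrough (hx.comp_left H) hij
  rw [hG, hG, internal_eq, coupling_eq]

end

/-- If `L` satisfies the EEP condition with respect to a partition into `k`
nonempty clusters, then the coupled vector field `G(x)_i = F(x_i) − σ ∑_j L_{ij} H(x_j)`
maps cluster-constant states to cluster-constant states. -/
theorem coupled_field_preserves_cluster_constant
    {N k m : ℕ} (c : Fin N → Fin k) (hc : Function.Surjective c)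
    (L : Matrix (Fin N) (Fin N) ℝ)
    (hEEP : ∀ (β : Fin k) (i j : Fin N), c i = c j →
      ∑ p ∈ Finset.univ.filter (fun p => c p = β), L i p =
      ∑ p ∈ Finset.univ.filter (fun p => c p = β), L j p)
    (σ : ℝ) (F H : (Fin m → ℝ) → (Fin m → ℝ))
    (G : (Fin N → Fin m → ℝ) → (Fin N → Fin m → ℝ))
    (hG : ∀ x i, G x i = F (x i) - σ • ∑ j, L i j • H (x j))
    (x : Fin N → Fin m → ℝ)
    (hx : ∀ i j, c i = c j → x i = x j) :
    ∀ i j, c i = c j → G x i = G x j :=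
  fun _ _ hij ↦
    coupled_field_preserves_cluster_constant_general (fun β i j ↦ hEEP β i j) hG (hx · ·) hij
end
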